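/- Let m ≤ n be positive integers and let Ψ = Ψ_{m,n} : ℝ² → ℂ² be the Lee–Wang map. Then the squared norm of its mean curvature vector satisfies, for all (s,t): ‖∂_s²Ψ + ∂_t²Ψ‖² / ‖∂_sΨ‖⁴ = (m+n)/(n·cos²s + m·sin²s), and consequently 1 < (m+n)/n ≤ ‖∂_s²Ψ + ∂_t²Ψ‖²/‖∂_sΨ‖⁴ ≤ (m+n)/m. -/

import Mathlib

/-- Real inner product on ℂ ≅ ℝ²: ⟨u,v⟩ = Re(u · conj v). -/
noncomputable def rinner (u v : ℂ) : ℝ := u.re * v.re + u.im * v.im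

/-- Real inner product on ℂ² ≅ ℝ⁴. -/
noncomputable def rinner2 (u v : ℂ × ℂ) : ℝ := rinner u.1 v.1 + rinner u.2 v.2

/-- Squared Euclidean norm on ℂ² ≅ ℝ⁴. -/
noncomputable def norm2 (v : ℂ × ℂ) : ℝ := ‖v.1‖ ^ 2 + ‖v.2‖ ^ 2

/-- Partial derivative of F : ℝ² → ℂ² in the first variable. -/
noncomputable def pd1 (F : ℝ → ℝ → ℂ × ℂ) (a b : ℝ) : ℂ × ℂ := deriv (fun x => F x b) a

/-- Partial derivative of F : ℝ² → ℂ² in the second variable. -/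
noncomputable def pd2 (F : ℝ → ℝ → ℂ × ℂ) (a b : ℝ) : ℂ × ℂ := deriv (fun y => F a y) b

/-- The Lee–Wang map Ψ_{m,n}(s,t) = √(m+n)((1/√n)cos s e^{i√(n/m)t}, (1/√m)sin s e^{i√(m/n)t}). -/
noncomputable def leeWang (m n : ℕ) (s t : ℝ) : ℂ × ℂ :=
  ((Real.sqrt (m + n) * (1 / Real.sqrt n) * Real.cos s : ℝ)
      * Complex.exp (Complex.I * (Real.sqrt ((n : ℝ) / m) * t)),
   (Real.sqrt (m + n) * (1 / Real.sqrt m) * Real.sin s : ℝ)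
      * Complex.exp (Complex.I * (Real.sqrt ((m : ℝ) / n) * t)))

/-!
The Lee–Wang torus is swept out by the ellipse `(√((m+n)/n) cos s, √((m+n)/m) sin s)` under the
one-parameter group `e^{tω}` with `ω = (i√(n/m), i√(m/n))`, where `ℂ²` carries its componentwise
product. Both partial derivatives of a product `γ(s) e^{tω}` are again of the form `(·) e^{tω}`,
multiplication by `e^{tω}` is an isometry, and the ellipse satisfies `γ'' = -γ`; hence the Laplacian
is `(ω² - 1) γ(s) e^{tω}`. Up to constants, its squared norm and the conformal factor are
both equal to `n cos² s + m sin² s`.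
-/

/-- The one-parameter group `e^{tω}` of the torus acting on `ℂ²` with velocity `ω = (ia, ib)`,
encoded as a curve in the product ring `ℂ × ℂ`, so that the action is the ring multiplication. -/
noncomputable def torusFlow (a b t : ℝ) : ℂ × ℂ :=
  (Complex.exp (Complex.I * (a * t)), Complex.exp (Complex.I * (b * t)))

/-- The ellipse with semi-axes `|p|` and `|q|` in the real plane `ℝ² ⊂ ℂ²`, the profile curve of the
Lee–Wang torus; negative `p` and `q` are allowed so that second derivatives are again ellipses. -/
noncomputable def ellipse (p q s : ℝ) : ℂ × ℂ :=
  ((p * Real.cos s : ℝ), (q * Real.sin s : ℝ))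

lemma pd1_mul {γ γ' : ℝ → ℂ × ℂ} (hγ : ∀ s, HasDerivAt γ (γ' s) s)
    (c : ℝ → ℂ × ℂ) :
    pd1 (fun s t => γ s * c t) = fun s t => γ' s * c t := by
  funext s t
  exact ((hγ s).mul_const (c t)).deriv

lemma pd2_mul {c c' : ℝ → ℂ × ℂ} (γ : ℝ → ℂ × ℂ) (hc : ∀ t, HasDerivAt c (c' t) t) :
    pd2 (fun s t => γ s * c t) = fun s t => γ s * c' t := by
  funext s t
  exact ((hc t).const_mul (γ s)).deriv

section TorusFlow

variable (a b : ℝ)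

lemma hasDerivAt_cexp_I_mul (t : ℝ) :
    HasDerivAt (fun t : ℝ => Complex.exp (Complex.I * (a * t)))
      (Complex.I * a * Complex.exp (Complex.I * (a * t))) t := by
  have h_linear : HasDerivAt (fun t : ℝ => Complex.I * ((a : ℂ) * t)) (Complex.I * a) t := by
    simpa using ((hasDerivAt_id t).ofReal_comp.const_mul (a : ℂ)).const_mul Complex.I
  simpa only [mul_comm] using h_linear.cexp

lemma hasDerivAt_torusFlow (t : ℝ) :
    HasDerivAt (torusFlow a b) ((Complex.I * a, Complex.I * b) * torusFlow a b t) t :=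
  (hasDerivAt_cexp_I_mul a t).prodMk (hasDerivAt_cexp_I_mul b t)

lemma norm2_mul_torusFlow (v : ℂ × ℂ) (t : ℝ) : norm2 (v * torusFlow a b t) = norm2 v := by
  have h_unit (x : ℝ) : ‖Complex.exp (Complex.I * (x * t))‖ = 1 := by
    exact_mod_cast Complex.norm_exp_I_mul_ofReal (x * t)
  simp only [norm2, torusFlow, Prod.fst_mul, Prod.snd_mul, norm_mul, h_unit, mul_one]

lemma pd2_pd2_mul_torusFlow (γ : ℝ → ℂ × ℂ) :
    pd2 (pd2 fun s t => γ s * torusFlow a b t) =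
      fun s t => (-(a : ℂ) ^ 2, -(b : ℂ) ^ 2) * γ s * torusFlow a b t := by
  have h_sq : ((Complex.I * a, Complex.I * b) : ℂ × ℂ) ^ 2 = (-(a : ℂ) ^ 2, -(b : ℂ) ^ 2) := by
    simp [Prod.pow_mk, mul_pow]
  rw [pd2_mul γ (hasDerivAt_torusFlow a b),
    pd2_mul γ fun t => (hasDerivAt_torusFlow a b t).const_mul _, ← h_sq]
  funext s t
  ring

end TorusFlow

section Ellipse

variable (p q : ℝ)

lemma hasDerivAt_ellipse (s : ℝ) :
    HasDerivAt (ellipse p q) (ellipse p q (s + Real.pi / 2)) s := by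
  rw [ellipse, Real.cos_add_pi_div_two, Real.sin_add_pi_div_two]
  exact ((Real.hasDerivAt_cos s).const_mul p).ofReal_comp.prodMk
    ((Real.hasDerivAt_sin s).const_mul q).ofReal_comp

lemma ellipse_add_pi (s : ℝ) : ellipse p q (s + Real.pi) = -ellipse p q s := by
  simp [ellipse]

lemma ofReal_mul_ellipse (x y s : ℝ) :
    ((x : ℂ), (y : ℂ)) * ellipse p q s = ellipse (x * p) (y * q) s := by
  simp [ellipse, mul_assoc]

lemma norm2_ellipse (s : ℝ) :
    norm2 (ellipse p q s) = p ^ 2 * Real.cos s ^ 2 + q ^ 2 * Real.sin s ^ 2 := by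
  simp only [norm2, ellipse, Complex.norm_real, Real.norm_eq_abs, sq_abs, mul_pow]

end Ellipse

section RotatedEllipse

variable (a b p q : ℝ)

lemma pd1_ellipse_mul (c : ℝ → ℂ × ℂ) :
    pd1 (fun s t => ellipse p q s * c t) = fun s t => ellipse p q (s + Real.pi / 2) * c t :=
  pd1_mul (hasDerivAt_ellipse p q) c

lemma pd1_pd1_ellipse_mul (c : ℝ → ℂ × ℂ) :
    pd1 (pd1 fun s t => ellipse p q s * c t) = fun s t => -ellipse p q s * c t := by
  rw [pd1_ellipse_mul,
    pd1_mul fun s => (hasDerivAt_ellipse p q (s + Real.pi / 2)).comp_add_const s (Real.pi / 2)]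
  simp only [add_assoc, add_halves, ellipse_add_pi]

lemma norm2_pd1_ellipse_mul_torusFlow (s t : ℝ) :
    norm2 (pd1 (fun s t => ellipse p q s * torusFlow a b t) s t) =
      p ^ 2 * Real.sin s ^ 2 + q ^ 2 * Real.cos s ^ 2 := by
  rw [pd1_ellipse_mul, norm2_mul_torusFlow, norm2_ellipse, Real.cos_add_pi_div_two,
    Real.sin_add_pi_div_two, neg_sq]

lemma laplacian_ellipse_mul_torusFlow (s t : ℝ) :
    pd1 (pd1 fun s t => ellipse p q s * torusFlow a b t) s t +
        pd2 (pd2 fun s t => ellipse p q s * torusFlow a b t) s t =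
      ellipse (-(1 + a ^ 2) * p) (-(1 + b ^ 2) * q) s * torusFlow a b t := by
  have h_factor : (-1 + (-(a : ℂ) ^ 2, -(b : ℂ) ^ 2) : ℂ × ℂ) =
      (((-(1 + a ^ 2) : ℝ) : ℂ), ((-(1 + b ^ 2) : ℝ) : ℂ)) := by
    ext1 <;> simp [neg_add, -neg_add_rev]
  rw [pd1_pd1_ellipse_mul, pd2_pd2_mul_torusFlow, ← ofReal_mul_ellipse, ← h_factor]
  ring

lemma norm2_laplacian_ellipse_mul_torusFlow (s t : ℝ) :
    norm2 (pd1 (pd1 fun s t => ellipse p q s * torusFlow a b t) s t +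
        pd2 (pd2 fun s t => ellipse p q s * torusFlow a b t) s t) =
      (1 + a ^ 2) ^ 2 * p ^ 2 * Real.cos s ^ 2 + (1 + b ^ 2) ^ 2 * q ^ 2 * Real.sin s ^ 2 := by
  rw [laplacian_ellipse_mul_torusFlow, norm2_mul_torusFlow, norm2_ellipse]
  ring

end RotatedEllipse

section ConvexCombination

variable {x y : ℝ}

lemma le_mul_cos_sq_add_mul_sin_sq (hxy : x ≤ y) (s : ℝ) :
    x ≤ y * Real.cos s ^ 2 + x * Real.sin s ^ 2 :=
  calc
    x = x * Real.cos s ^ 2 + x * Real.sin s ^ 2 := by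
      rw [← mul_add, Real.cos_sq_add_sin_sq, mul_one]
    _ ≤ y * Real.cos s ^ 2 + x * Real.sin s ^ 2 := by gcongr

lemma mul_cos_sq_add_mul_sin_sq_le (hxy : x ≤ y) (s : ℝ) :
    y * Real.cos s ^ 2 + x * Real.sin s ^ 2 ≤ y :=
  calc
    y * Real.cos s ^ 2 + x * Real.sin s ^ 2 ≤ y * Real.cos s ^ 2 + y * Real.sin s ^ 2 := by gcongr
    _ = y := by rw [← mul_add, Real.cos_sq_add_sin_sq, mul_one]

lemma mul_cos_sq_add_mul_sin_sq_pos (hx : 0 < x) (hy : 0 < y) (s : ℝ) :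
    0 < y * Real.cos s ^ 2 + x * Real.sin s ^ 2 :=
  calc
    0 < min x y := lt_min hx hy
    _ ≤ min x y * Real.cos s ^ 2 + min x y * Real.sin s ^ 2 :=
      le_mul_cos_sq_add_mul_sin_sq le_rfl s
    _ ≤ y * Real.cos s ^ 2 + x * Real.sin s ^ 2 := by
      gcongr
      exacts [min_le_right x y, min_le_left x y]

end ConvexCombination

lemma sq_sqrt_mul_one_div_sqrt {x y : ℝ} (hx : 0 ≤ x) (hy : 0 ≤ y) :
    (√x * (1 / √y)) ^ 2 = x / y := by
  rw [mul_one_div, div_pow, Real.sq_sqrt hx, Real.sq_sqrt hy]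

lemma leeWang_eq_ellipse_mul_torusFlow (m n : ℕ) :
    leeWang m n = fun s t =>
      ellipse (√(m + n) * (1 / √n)) (√(m + n) * (1 / √m)) s * torusFlow √(n / m) √(m / n) t :=
  rfl

section LeeWang

variable {m n : ℕ}

lemma norm2_pd1_leeWang (hm : 0 < m) (hn : 0 < n) (s t : ℝ) :
    norm2 (pd1 (leeWang m n) s t) =
      (m + n) / (m * n) * (n * Real.cos s ^ 2 + m * Real.sin s ^ 2) := by
  rw [leeWang_eq_ellipse_mul_torusFlow, norm2_pd1_ellipse_mul_torusFlow,
    sq_sqrt_mul_one_div_sqrt (by positivity) (by positivity),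
    sq_sqrt_mul_one_div_sqrt (by positivity) (by positivity)]
  field_simp
  ring

lemma norm2_laplacian_leeWang (hm : 0 < m) (hn : 0 < n) (s t : ℝ) :
    norm2 (pd1 (pd1 (leeWang m n)) s t + pd2 (pd2 (leeWang m n)) s t) =
      (m + n) ^ 3 / (m * n) ^ 2 * (n * Real.cos s ^ 2 + m * Real.sin s ^ 2) := by
  rw [leeWang_eq_ellipse_mul_torusFlow, norm2_laplacian_ellipse_mul_torusFlow,
    sq_sqrt_mul_one_div_sqrt (by positivity) (by positivity),
    sq_sqrt_mul_one_div_sqrt (by positivity) (by positivity),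
    Real.sq_sqrt (by positivity), Real.sq_sqrt (by positivity)]
  field_simp
  ring

lemma norm2_laplacian_div_norm2_pd1_sq_leeWang (hm : 0 < m) (hn : 0 < n) (s t : ℝ) :
    norm2 (pd1 (pd1 (leeWang m n)) s t + pd2 (pd2 (leeWang m n)) s t)
        / (norm2 (pd1 (leeWang m n) s t)) ^ 2 =
      (m + n : ℝ) / (n * Real.cos s ^ 2 + m * Real.sin s ^ 2) := by
  have h_pos : 0 < (n : ℝ) * Real.cos s ^ 2 + m * Real.sin s ^ 2 :=
    mul_cos_sq_add_mul_sin_sq_pos (by positivity) (by positivity) s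
  rw [norm2_laplacian_leeWang hm hn, norm2_pd1_leeWang hm hn]
  field_simp

end LeeWang

/-- The squared norm of the mean curvature vector of the Lee–Wang torus:
‖∂ₛ²Ψ + ∂ₜ²Ψ‖²/‖∂ₛΨ‖⁴ = (m+n)/(n cos²s + m sin²s), which lies in
((m+n)/n, (m+n)/m] with 1 < (m+n)/n. -/
theorem lee_wang_mean_curvature (m n : ℕ) (hm : 0 < m) (hmn : m ≤ n) :
    ∀ s t : ℝ,
      norm2 (pd1 (pd1 (leeWang m n)) s t + pd2 (pd2 (leeWang m n)) s t)
          / (norm2 (pd1 (leeWang m n) s t)) ^ 2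
        = (m + n : ℝ) / (n * Real.cos s ^ 2 + m * Real.sin s ^ 2) ∧
      1 < (m + n : ℝ) / n ∧
      (m + n : ℝ) / n ≤
        norm2 (pd1 (pd1 (leeWang m n)) s t + pd2 (pd2 (leeWang m n)) s t)
          / (norm2 (pd1 (leeWang m n) s t)) ^ 2 ∧
      norm2 (pd1 (pd1 (leeWang m n)) s t + pd2 (pd2 (leeWang m n)) s t)
          / (norm2 (pd1 (leeWang m n) s t)) ^ 2 ≤ (m + n : ℝ) / m := by
  intro s t
  have hn : 0 < n := hm.trans_le hmn
  have hm_real : (0 : ℝ) < m := Nat.cast_pos.2 hm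
  have hn_real : (0 : ℝ) < n := Nat.cast_pos.2 hn
  have hmn_real : (m : ℝ) ≤ n := Nat.cast_le.2 hmn
  rw [norm2_laplacian_div_norm2_pd1_sq_leeWang hm hn]
  refine ⟨rfl, ?_, ?_, ?_⟩
  · rw [one_lt_div hn_real]
    exact lt_add_of_pos_left _ hm_real
  · exact div_le_div_of_nonneg_left (by positivity)
      (mul_cos_sq_add_mul_sin_sq_pos hm_real hn_real s) (mul_cos_sq_add_mul_sin_sq_le hmn_real s)
  · exact div_le_div_of_nonneg_left (by positivity) hm_real
      (le_mul_cos_sq_add_mul_sin_sq hmn_real s)
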